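/- Let B = 2π/√6, F(α) = (1 + e^{−α})/(1 + e^{−α} + e^{−2α}), and for integers n ≥ 0 and ℓ ≥ 0 let Q₁(n, ℓ) = 2n(3n + 1) + 3nℓ and Q₂(n, ℓ) = Q₁(n, ℓ) + 8n + 4 + 2ℓ. There exist constants C > 0 and N₀ such that for all integers N ≥ N₀ and all integers ℓ with N^{3/8} ≤ ℓ ≤ √N·(log N)², the sum I_M = Σ_{n≥0} (e^{−B·Q₁(n,ℓ)/(2√N)} − e^{−B·Q₂(n,ℓ)/(2√N)}) satisfies |I_M − F(Bℓ/(2√N))| ≤ C·N^{−1/10}·F(Bℓ/(2√N)); that is, I_M = (1 + O(N^{−1/10}))·F(Bℓ/(2√N)) uniformly in this range. -/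

import Mathlib

open Real

/-- `Q₁(n, ℓ) = 2n(3n + 1) + 3nℓ`. -/
def Q1 (n ℓ : ℕ) : ℕ := 2 * n * (3 * n + 1) + 3 * n * ℓ

/-- `Q₂(n, ℓ) = Q₁(n, ℓ) + 8n + 4 + 2ℓ`. -/
def Q2 (n ℓ : ℕ) : ℕ := Q1 n ℓ + 8 * n + 4 + 2 * ℓ

/-- The limit shape function `F(α) = (1 + e^{-α})/(1 + e^{-α} + e^{-2α})`. -/
noncomputable def Frk (α : ℝ) : ℝ :=
  (1 + Real.exp (-α)) / (1 + Real.exp (-α) + Real.exp (-2 * α))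

theorem core_bound (b x : ℝ) (hb : 0 < b) (hx : 0 < x) (hx1 : x < 1) (f : ℕ → ℝ)
    (hf : ∀ n : ℕ, f n = (x ^ 3) ^ n * (Real.exp (-(b * (6 * n ^ 2 + 2 * n))) -
      x ^ 2 * (Real.exp (-(b * (6 * n ^ 2 + 2 * n))) * Real.exp (-(b * (8 * n + 4)))))) :
    |(∑' n, f n) - (1 + x) / (1 + x + x ^ 2)| ≤ 20 * b / (1 - x ^ 3) ^ 2 := by
  have hy0 : 0 < x ^ 3 := by positivity
  have hy1 : x ^ 3 < 1 := pow_lt_one₀ hx.le hx1 (by norm_num)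
  have hxy : x ^ 3 ≤ x ^ 2 := by nlinarith [sq_nonneg x]
  have hx21 : x ^ 2 < 1 := pow_lt_one₀ hx.le hx1 (by norm_num)
  set y := x ^ 3 with hy
  have hyn : ‖y‖ < 1 := by rw [Real.norm_of_nonneg hy0.le]; exact hy1
  have hd : 0 < 1 - y := by linarith
  have hg : HasSum (fun n : ℕ => y ^ n * (1 - x ^ 2)) ((1 + x) / (1 + x + x ^ 2)) := by
    have h := (hasSum_geometric_of_lt_one hy0.le hy1).mul_right (1 - x ^ 2)
    suffices h0 : (1 + x) / (1 + x + x ^ 2) = (1 - y)⁻¹ * (1 - x ^ 2) by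
      rw [h0]; exact h
    have : 0 < 1 + x + x ^ 2 := by positivity
    rw [div_eq_iff this.ne', inv_mul_eq_div, div_mul_eq_mul_div, eq_div_iff hd.ne', hy]
    ring
  have h1 := hasSum_choose_mul_geometric_of_norm_lt_one 1 hyn
  have h2 := hasSum_choose_mul_geometric_of_norm_lt_one 2 hyn
  have hB := (h2.mul_left (12 * b * (1 - y))).add (h1.mul_left (8 * b))
  have hbd : ∀ n : ℕ, ‖f n - y ^ n * (1 - x ^ 2)‖ ≤
      12 * b * (1 - y) * (((n + 2).choose 2 : ℕ) * y ^ n) +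
      8 * b * (((n + 1).choose 1 : ℕ) * y ^ n) := by
    intro n
    rw [hf n]
    have hn : (0 : ℝ) ≤ n := Nat.cast_nonneg n
    have c2 : (((n + 2).choose 2 : ℕ) : ℝ) = (n + 2) * (n + 1) / 2 := by
      rw [Nat.cast_choose_two]; push_cast; ring
    rw [c2, Nat.choose_one_right]
    push_cast
    set G := Real.exp (-(b * (6 * n ^ 2 + 2 * n))) with hG
    set H := Real.exp (-(b * (8 * n + 4))) with hH
    have G0 : 0 < G := Real.exp_pos _
    have H0 : 0 < H := Real.exp_pos _
    have G1 : G ≤ 1 := Real.exp_le_one_iff.2 (by simp only [neg_nonpos]; positivity)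
    have H1 : H ≤ 1 := Real.exp_le_one_iff.2 (by simp only [neg_nonpos]; positivity)
    have G2 : 1 - G ≤ b * (6 * n ^ 2 + 2 * n) := by
      have := Real.add_one_le_exp (-(b * (6 * (n:ℝ) ^ 2 + 2 * n))); linarith
    have H2 : 1 - H ≤ b * (8 * n + 4) := by
      have := Real.add_one_le_exp (-(b * (8 * (n:ℝ) + 4))); linarith
    have e : y ^ n * (G - x ^ 2 * (G * H)) - y ^ n * (1 - x ^ 2) =
        y ^ n * (x ^ 2 * G * (1 - H) - (1 - x ^ 2) * (1 - G)) := by ring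
    have yn : 0 < y ^ n := by positivity
    have e2 : 12 * b * (1 - y) * ((n + 2) * (n + 1) / 2 * y ^ n) + 8 * b * ((n + 1) * y ^ n)
      = y ^ n * (b * (8 * n + 8) + (1 - y) * (b * (6 * n ^ 2 + 18 * n + 12))) := by ring
    rw [e, e2, norm_mul, Real.norm_of_nonneg yn.le]
    refine mul_le_mul_of_nonneg_left ?_ yn.le
    have A1 : x ^ 2 * G * (1 - H) ≤ b * (8 * n + 8) := by
      have : x ^ 2 * G ≤ 1 := mul_le_one₀ hx21.le G0.le G1
      have : x ^ 2 * G * (1 - H) ≤ 1 * (1 - H) :=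
        mul_le_mul_of_nonneg_right this (by linarith)
      linarith
    have A2 : (1 - x ^ 2) * (1 - G) ≤ (1 - y) * (b * (6 * n ^ 2 + 18 * n + 12)) := by
      apply mul_le_mul (by linarith) _ (by linarith) hd.le
      have : 0 ≤ b * (n : ℝ) := by positivity
      nlinarith
    have A3 : 0 ≤ x ^ 2 * G * (1 - H) := mul_nonneg (by positivity) (by linarith)
    have A4 : 0 ≤ (1 - x ^ 2) * (1 - G) := mul_nonneg (by linarith) (by linarith)
    rw [Real.norm_eq_abs, abs_le]
    constructor <;> linarith
  have hs : Summable (fun n => f n - y ^ n * (1 - x ^ 2)) :=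
    Summable.of_norm_bounded hB.summable hbd
  have hfs : Summable f := by
    have := hs.add hg.summable
    simpa using this
  have hfin := tsum_of_norm_bounded hB hbd
  rw [hfs.tsum_sub hg.summable, hg.tsum_eq, Real.norm_eq_abs] at hfin
  refine hfin.trans (le_of_eq ?_)
  field_simp
  ring

theorem stmt_12 :
    ∃ C > (0 : ℝ), ∃ N₀ : ℕ, ∀ N : ℕ, N₀ ≤ N → ∀ ℓ : ℕ,
      (N : ℝ) ^ ((3 : ℝ) / 8) ≤ (ℓ : ℝ) → (ℓ : ℝ) ≤ Real.sqrt N * (Real.log N) ^ 2 →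
      |(∑' n : ℕ,
          (Real.exp (-(2 * π / Real.sqrt 6) * (Q1 n ℓ : ℝ) / (2 * Real.sqrt N)) -
            Real.exp (-(2 * π / Real.sqrt 6) * (Q2 n ℓ : ℝ) / (2 * Real.sqrt N)))) -
          Frk (2 * π / Real.sqrt 6 * (ℓ : ℝ) / (2 * Real.sqrt N))| ≤
        C * (N : ℝ) ^ (-(1 / 10) : ℝ) *
          Frk (2 * π / Real.sqrt 6 * (ℓ : ℝ) / (2 * Real.sqrt N)) := by
  refine ⟨320, by norm_num, 1, ?_⟩
  intro N hN ℓ hl _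
  have hN1 : (1 : ℝ) ≤ N := by exact_mod_cast hN
  have hN0 : (0 : ℝ) < N := by linarith
  set t : ℝ := (N : ℝ) ^ (-(1 / 8) : ℝ) with ht
  have t0 : 0 < t := Real.rpow_pos_of_pos hN0 _
  have t1 : t ≤ 1 := Real.rpow_le_one_of_one_le_of_nonpos hN1 (by norm_num)
  have ht4 : t ^ 4 = (Real.sqrt N)⁻¹ := by
    rw [Real.sqrt_eq_rpow, ← Real.rpow_neg hN0.le, ht, ← Real.rpow_natCast, ← Real.rpow_mul hN0.le]
    norm_num
  have htl : (N : ℝ) ^ ((3 : ℝ) / 8) = t * Real.sqrt N := by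
    rw [Real.sqrt_eq_rpow, ht, ← Real.rpow_add hN0]; norm_num
  have ht2 : t ^ 2 ≤ (N : ℝ) ^ (-(1 / 10) : ℝ) := by
    rw [ht, ← Real.rpow_natCast, ← Real.rpow_mul hN0.le]
    exact Real.rpow_le_rpow_of_exponent_le hN1 (by norm_num)
  have s0 : 0 < Real.sqrt N := Real.sqrt_pos.2 hN0
  set b : ℝ := 2 * π / Real.sqrt 6 / (2 * Real.sqrt N) with hb
  have s6 : 0 < Real.sqrt 6 := Real.sqrt_pos.2 (by norm_num)
  have s6l : 2 ≤ Real.sqrt 6 := Real.le_sqrt_of_sq_le (by norm_num)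
  have s6u : Real.sqrt 6 ≤ 3 := Real.sqrt_le_iff.2 (by norm_num)
  have hbe : b = (π / Real.sqrt 6) * t ^ 4 := by rw [hb, ht4]; field_simp
  have k1 : 1 ≤ π / Real.sqrt 6 := by
    rw [le_div_iff₀ s6]; linarith [Real.pi_gt_three]
  have k2 : π / Real.sqrt 6 ≤ 2 := by
    rw [div_le_iff₀ s6]; linarith [Real.pi_le_four]
  have t4 : 0 < t ^ 4 := by positivity
  have b0 : 0 < b := by rw [hbe]; positivity
  have hbu : b ≤ 2 * t ^ 4 := by
    rw [hbe]; exact mul_le_mul_of_nonneg_right k2 t4.le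
  have hbl : t ^ 4 ≤ b := by
    rw [hbe]; exact le_mul_of_one_le_left t4.le k1
  have hal : t ≤ b * ℓ := by
    calc t = t ^ 4 * (t * Real.sqrt N) := by rw [ht4]; field_simp
      _ ≤ b * ℓ := by
        rw [htl] at hl
        exact mul_le_mul hbl hl (by positivity) b0.le
  have harg : 2 * π / Real.sqrt 6 * (ℓ : ℝ) / (2 * Real.sqrt N) = b * ℓ := by rw [hb]; ring
  rw [harg]
  set x : ℝ := Real.exp (-(b * ℓ)) with hx
  have x0 : 0 < x := Real.exp_pos _
  have x1 : x < 1 := by rw [hx, ← Real.exp_zero]; exact Real.exp_lt_exp.2 (by linarith)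
  have hF : Frk (b * ℓ) = (1 + x) / (1 + x + x ^ 2) := by
    rw [Frk, hx, ← Real.exp_nat_mul]; norm_num
  have hF2 : 1 / 2 ≤ Frk (b * ℓ) := by
    rw [hF, div_le_div_iff₀ (by norm_num) (by positivity)]; nlinarith
  have hcore := core_bound b x b0 x0 x1
    (fun n : ℕ => Real.exp (-(2 * π / Real.sqrt 6) * (Q1 n ℓ : ℝ) / (2 * Real.sqrt N)) -
            Real.exp (-(2 * π / Real.sqrt 6) * (Q2 n ℓ : ℝ) / (2 * Real.sqrt N))) (by
    intro n
    have a1 : -(2 * π / Real.sqrt 6) * (Q1 n ℓ : ℝ) / (2 * Real.sqrt N) = -(b * Q1 n ℓ) := by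
      rw [hb]; ring
    have a2 : -(2 * π / Real.sqrt 6) * (Q2 n ℓ : ℝ) / (2 * Real.sqrt N) = -(b * Q2 n ℓ) := by
      rw [hb]; ring
    simp only [a1, a2]
    rw [mul_sub, hx]
    simp only [← Real.exp_nat_mul, ← Real.exp_add]
    congr 2
    · simp only [Q1]; push_cast; ring
    · simp only [Q2, Q1]; push_cast; ring)
  rw [← hF] at hcore
  refine hcore.trans ?_
  have hxt : x * (1 + t) ≤ 1 := by
    have h1 : 1 + t ≤ Real.exp (b * ℓ) := by linarith [Real.add_one_le_exp (b * ℓ)]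
    calc x * (1 + t) ≤ x * Real.exp (b * ℓ) := mul_le_mul_of_nonneg_left h1 x0.le
      _ = 1 := by rw [hx, ← Real.exp_add]; simp
  have hx3 : x ^ 3 ≤ x := by
    have : x ^ 2 ≤ 1 := pow_le_one₀ x0.le x1.le
    nlinarith
  have hd : t / 2 ≤ 1 - x ^ 3 := by
    have e4 : x ≤ 1 / (1 + t) := by rw [le_div_iff₀ (by linarith)]; exact hxt
    have e5 : 1 / (1 + t) ≤ 1 - t / 2 := by
      rw [div_le_iff₀ (by linarith)]; nlinarith
    linarith
  have hd2 : (t / 2) ^ 2 ≤ (1 - x ^ 3) ^ 2 := pow_le_pow_left₀ (by positivity) hd 2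
  have : 20 * b / (1 - x ^ 3) ^ 2 ≤ 160 * t ^ 2 := by
    rw [div_le_iff₀ (lt_of_lt_of_le (by positivity) hd2)]
    have : 160 * t ^ 2 * (t / 2) ^ 2 ≤ 160 * t ^ 2 * (1 - x ^ 3) ^ 2 :=
      mul_le_mul_of_nonneg_left hd2 (by positivity)
    have e3 : 160 * t ^ 2 * (t / 2) ^ 2 = 40 * t ^ 4 := by ring
    linarith
  have hp : 0 < (N : ℝ) ^ (-(1 / 10) : ℝ) := Real.rpow_pos_of_pos hN0 _
  have hpF := mul_le_mul_of_nonneg_left hF2 hp.le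
  linarith
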